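/- Let H be a Hopf algebra over a field k, let I be a left coideal of H, and let M be a Hopf subalgebra of H (a subalgebra with Δ(M) ⊆ M ⊗ M and σ(M) ⊆ M). Then the k-span of { (ad a)b : a ∈ M, b ∈ I }, where (ad a)b = Σ a₍₁₎ b σ(a₍₂₎), is a left coideal of H which is invariant under the adjoint action of M: applying ad m for any m ∈ M maps this span into itself. -/

import Mathlib

open TensorProduct

/-- `I` is a left coideal of `H` over `k`: `Δ(I) ⊆ H ⊗ I`. -/
def IsLeftCoideal (k : Type*) {H : Type*} [CommSemiring k] [AddCommMonoid H] [Module k H]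
    [CoalgebraStruct k H] (I : Submodule k H) : Prop :=
  ∀ x ∈ I, Coalgebra.comul (R := k) x ∈
    LinearMap.range (TensorProduct.map (LinearMap.id : H →ₗ[k] H) I.subtype)

/-- The left adjoint action `(ad a) b = Σ a₍₁₎ b σ(a₍₂₎)` of a Hopf algebra on itself. -/
noncomputable def hopfAd (k : Type*) {H : Type*} [Field k] [Ring H] [HopfAlgebra k H]
    (a b : H) : H :=
  LinearMap.mul' k H
    (TensorProduct.map (LinearMap.mulRight k b) (HopfAlgebra.antipode (R := k))
      (Coalgebra.comul (R := k) a))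

open WithConv in
theorem aux_conv_mem {k H A : Type*} [Field k] [Ring H] [HopfAlgebra k H] [Ring A] [Algebra k A]
    (M : Submodule k H)
    (hM : ∀ m ∈ M, Coalgebra.comul (R := k) m ∈
      LinearMap.range (TensorProduct.map M.subtype M.subtype))
    (R : Submodule k A) (f g : WithConv (H →ₗ[k] A))
    (h : ∀ m ∈ M, ∀ n ∈ M, f m * g n ∈ R) (a : H) (ha : a ∈ M) : (f * g) a ∈ R := by
  obtain ⟨t, ht⟩ := hM a ha
  rw [LinearMap.convMul_apply, ← ht]
  clear ht
  induction t with
  | zero => simp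
  | add x y hx hy => simpa only [map_add] using R.add_mem hx hy
  | tmul x y => exact h x x.2 y y.2

theorem aux_ad_sum {k H : Type*} [Field k] [Ring H] [HopfAlgebra k H] (a b : H) :
    hopfAd k a b = ∑ i ∈ (Coalgebra.Repr.arbitrary k a).index,
      (Coalgebra.Repr.arbitrary k a).left i * b *
        HopfAlgebra.antipode k ((Coalgebra.Repr.arbitrary k a).right i) := by
  conv_lhs => rw [hopfAd, ← (Coalgebra.Repr.arbitrary k a).eq]
  simp

/-- the adjoint action, linear in the second variable -/
noncomputable def auxAd (k : Type*) {H : Type*} [Field k] [Ring H] [HopfAlgebra k H]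
    (a : H) : H →ₗ[k] H where
  toFun b := hopfAd k a b
  map_add' x y := by simp [aux_ad_sum, mul_add, add_mul, Finset.sum_add_distrib]
  map_smul' c x := by simp [aux_ad_sum, Finset.smul_sum]

theorem aux_ad_mul {k H : Type*} [Field k] [Ring H] [HopfAlgebra k H] (m a b : H) :
    hopfAd k (m * a) b = hopfAd k m (hopfAd k a b) := by
  unfold hopfAd
  rw [Bialgebra.comul_mul]
  generalize Coalgebra.comul (R := k) a = t
  generalize Coalgebra.comul (R := k) m = s
  induction s with
  | zero => simp
  | add x y hx hy => simp only [add_mul, map_add, hx, hy]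
  | tmul x y =>
    induction t with
    | zero => simp
    | add z w hz hw =>
      simp only [mul_add, map_add, hz, hw]
      simp [mul_add, add_mul]
    | tmul z w => simp [HopfAlgebra.antipode_mul_antidistrib, mul_assoc]

section
open WithConv Algebra.TensorProduct

theorem aux_mulRight_conv {k H A : Type*} [Field k] [Ring H] [HopfAlgebra k H] [Ring A]
    [Algebra k A] (f g : WithConv (H →ₗ[k] A)) (X : A) :
    toConv (LinearMap.mulRight k X ∘ₗ (f * g).ofConv) =
      f * toConv (LinearMap.mulRight k X ∘ₗ g.ofConv) := by
  ext a
  change (f * g) a * X = _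
  rw [(Coalgebra.Repr.arbitrary k a).convMul_apply, (Coalgebra.Repr.arbitrary k a).convMul_apply,
    Finset.sum_mul]
  exact Finset.sum_congr rfl fun i _ => mul_assoc _ _ _

theorem aux_inv {k H A : Type*} [Field k] [Ring H] [HopfAlgebra k H] [Ring A] [Algebra k A]
    (h : H →ₐ[k] A) :
    toConv (h.toLinearMap ∘ₗ HopfAlgebra.antipode k) * toConv h.toLinearMap = 1 := by
  have := LinearMap.algHom_comp_convMul_distrib (R := k) h (toConv (HopfAlgebra.antipode k (A := H)))
    (toConv LinearMap.id)
  rw [LinearMap.antipode_mul_id] at this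
  apply WithConv.ofConv_injective
  refine Eq.trans this.symm ?_
  ext x
  simp [LinearMap.convOne_def]

theorem aux_comul {k H : Type*} [Field k] [Ring H] [HopfAlgebra k H] :
    toConv (Coalgebra.comul (R := k) (A := H)) =
      toConv (includeLeft (R := k) (S := k) (A := H) (B := H)).toLinearMap *
      toConv (includeRight (R := k) (A := H) (B := H)).toLinearMap := by
  ext a
  rw [(Coalgebra.Repr.arbitrary k a).convMul_apply]
  simp [(Coalgebra.Repr.arbitrary k a).eq]

theorem aux_comul_antipode {k H : Type*} [Field k] [Ring H] [HopfAlgebra k H] :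
    toConv (Coalgebra.comul (R := k) (A := H) ∘ₗ HopfAlgebra.antipode k) =
      toConv ((includeRight (R := k) (A := H) (B := H)).toLinearMap ∘ₗ HopfAlgebra.antipode k) *
      toConv ((includeLeft (R := k) (S := k) (A := H) (B := H)).toLinearMap ∘ₗ
        HopfAlgebra.antipode k) := by
  symm
  apply left_inv_eq_right_inv (a := toConv (Coalgebra.comul (R := k) (A := H)))
  · have key : ∀ {W : Type _} [Monoid W] {p q r t : W}, q * r = 1 → p * t = 1 →
        (p * q) * (r * t) = 1 := by
      intro W _ p q r t h1 h2
      rw [mul_assoc, ← mul_assoc q, h1, one_mul, h2]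
    exact (congrArg _ aux_comul).trans (key (aux_inv _) (aux_inv _))
  · exact LinearMap.comul_right_inv

theorem aux_comul_ad {k H : Type*} [Field k] [Ring H] [HopfAlgebra k H] (a b : H) :
    Coalgebra.comul (R := k) (hopfAd k a b) =
      (toConv (includeLeft (R := k) (S := k) (A := H) (B := H)).toLinearMap *
       ((toConv (LinearMap.mulRight k (Coalgebra.comul (R := k) b) ∘ₗ
          (includeRight (R := k) (A := H) (B := H)).toLinearMap) *
        toConv ((includeRight (R := k) (A := H) (B := H)).toLinearMap ∘ₗ HopfAlgebra.antipode k)) *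
        toConv ((includeLeft (R := k) (S := k) (A := H) (B := H)).toLinearMap ∘ₗ
        HopfAlgebra.antipode k))) a := by
  rw [mul_assoc, ← aux_comul_antipode, ← mul_assoc]
  have h := aux_mulRight_conv (toConv (includeLeft (R := k) (S := k) (A := H) (B := H)).toLinearMap)
    (toConv (includeRight (R := k) (A := H) (B := H)).toLinearMap) (Coalgebra.comul (R := k) b)
  rw [← aux_comul] at h
  simp only [ofConv_toConv] at h
  rw [← h, (Coalgebra.Repr.arbitrary k a).convMul_apply, aux_ad_sum]
  simp

theorem aux_mid {k H : Type*} [Field k] [Ring H] [HopfAlgebra k H] (a h b : H) :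
    (toConv (LinearMap.mulRight k (h ⊗ₜ[k] b) ∘ₗ
          (includeRight (R := k) (A := H) (B := H)).toLinearMap) *
        toConv ((includeRight (R := k) (A := H) (B := H)).toLinearMap ∘ₗ
          HopfAlgebra.antipode k)) a = h ⊗ₜ[k] hopfAd k a b := by
  rw [(Coalgebra.Repr.arbitrary k a).convMul_apply, aux_ad_sum, TensorProduct.tmul_sum]
  simp

end

/-- Lemma 1.2.  If `I` is a left coideal of a Hopf algebra `H` and `M` is a
Hopf subalgebra of `H`, then the span of `(ad M) I` is an `ad M`-invariant left coideal. -/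
theorem adjoint_span_is_left_coideal
    {k H : Type*} [Field k] [Ring H] [HopfAlgebra k H]
    (I : Submodule k H) (hI : IsLeftCoideal k I)
    (M : Subalgebra k H)
    (hMcomul : ∀ m ∈ M, Coalgebra.comul (R := k) m ∈
      LinearMap.range (TensorProduct.map (Subalgebra.toSubmodule M).subtype
        (Subalgebra.toSubmodule M).subtype))
    (hMantipode : ∀ m ∈ M, HopfAlgebra.antipode (R := k) m ∈ M)
    (J : Submodule k H)
    (hJ : J = Submodule.span k {x : H | ∃ a ∈ M, ∃ b ∈ I, x = hopfAd k a b}) :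
    IsLeftCoideal k J ∧ ∀ m ∈ M, ∀ x ∈ J, hopfAd k m x ∈ J := by
  subst hJ
  set J := Submodule.span k {x : H | ∃ a ∈ M, ∃ b ∈ I, x = hopfAd k a b} with hJ
  constructor
  · set K := LinearMap.range (TensorProduct.map (LinearMap.id : H →ₗ[k] H) J.subtype) with hK
    have hKl : ∀ (u : H) (t : H ⊗[k] H), t ∈ K → (u ⊗ₜ[k] 1) * t ∈ K := by
      rintro u _ ⟨t, rfl⟩
      induction t with
      | zero => simp
      | add x y hx hy => simpa only [map_add, mul_add] using K.add_mem hx hy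
      | tmul x y => exact ⟨(u * x) ⊗ₜ y, by simp⟩
    have hKr : ∀ (u : H) (t : H ⊗[k] H), t ∈ K → t * (u ⊗ₜ[k] 1) ∈ K := by
      rintro u _ ⟨t, rfl⟩
      induction t with
      | zero => simp
      | add x y hx hy => simpa only [map_add, add_mul] using K.add_mem hx hy
      | tmul x y => exact ⟨(x * u) ⊗ₜ y, by simp⟩
    intro x hx
    change x ∈ K.comap (Coalgebra.comul (R := k))
    refine (Submodule.span_le (p := K.comap (Coalgebra.comul (R := k)))).2 ?_ hx
    rintro _ ⟨a, ha, b, hb, rfl⟩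
    change Coalgebra.comul (R := k) (hopfAd k a b) ∈ K
    rw [aux_comul_ad]
    refine aux_conv_mem (Subalgebra.toSubmodule M) hMcomul K _ _ ?_ a ha
    intro m _ n hn
    refine hKl m _ ?_
    refine aux_conv_mem (Subalgebra.toSubmodule M) hMcomul K _ _ ?_ n hn
    intro p hp q _
    refine hKr _ _ ?_
    obtain ⟨t, ht⟩ := hI b hb
    rw [← ht]
    clear ht
    induction t with
    | zero => simp [LinearMap.convMul_def]
    | add x y hx hy =>
      have h := K.add_mem hx hy
      rw [map_add]
      convert h using 1
      simp only [(Coalgebra.Repr.arbitrary k p).convMul_apply]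
      simp [mul_add, add_mul, Finset.sum_add_distrib]
    | tmul x y =>
      rw [TensorProduct.map_tmul, aux_mid]
      exact ⟨x ⊗ₜ ⟨hopfAd k p y, Submodule.subset_span ⟨p, hp, y, y.2, rfl⟩⟩, rfl⟩
  · intro m hm x hx
    change x ∈ J.comap (auxAd k m)
    refine (Submodule.span_le (p := J.comap (auxAd k m))).2 ?_ hx
    rintro _ ⟨a, ha, b, hb, rfl⟩
    change hopfAd k m (hopfAd k a b) ∈ J
    rw [← aux_ad_mul]
    exact Submodule.subset_span ⟨_, M.mul_mem hm ha, b, hb, rfl⟩
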